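/- arXiv:2212.07857 — 2 statements merged into one kernel-verified Lean document; each statement's English description precedes it below -/
import Mathlib

section
/- Let u, v, f : ℝ¹⁶ → ℝ be C^∞-smooth functions, at least one of which has compact support. Then ∫_{ℝ¹⁶} det(Hess_𝕆(u), Hess_𝕆(v))·f dx = −(1/2)·∫_{ℝ¹⁶} Re( f₁·(v_{2̄2}·u_{1̄}) − f₁·(v_{1̄2}·u_{2̄}) − f₂·(v_{2̄1}·u_{1̄}) + f₂·(v_{1̄1}·u_{2̄}) ) dx, where f_i := Σ_{p=0}^{7} (∂f/∂x_i^p)·conj(e_p) and u_{ī} := Σ_{p=0}^{7} e_p·(∂u/∂x_i^p). (Proposition 10.3, integration by parts in 𝕆².) -/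
noncomputable section

open scoped Quaternion

/-- The octonions, realized as pairs of quaternions (Cayley–Dickson). -/
abbrev Oct : Type := ℍ[ℝ] × ℍ[ℝ]

/-- Octonionic multiplication: (x,y)·(w,z) = (xw − z̄y, zx + yw̄). -/
def omul (a b : Oct) : Oct :=
  (a.1 * b.1 - star b.2 * a.2, b.2 * a.1 + a.2 * star b.1)

/-- Octonionic conjugation. -/
def oconj (a : Oct) : Oct := (star a.1, -a.2)

/-- Real part of an octonion. -/
def oRe (a : Oct) : ℝ := a.1.re

/-- Squared norm |q|² = Re(q·q̄). -/
def onSq (a : Oct) : ℝ := oRe (omul a (oconj a))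

/-- Octonionic Hermitian 2×2 matrix: (α, β, q) represents [[α, q],[q̄, β]]. -/
abbrev Herm : Type := ℝ × ℝ × Oct

/-- Determinant of an octonionic Hermitian 2×2 matrix. -/
def detH (A : Herm) : ℝ := A.1 * A.2.1 - onSq A.2.2

/-- The quadratic form ξ ↦ Re(ξ*Aξ). -/
def qform (A : Herm) (ξ : Oct × Oct) : ℝ :=
  A.1 * onSq ξ.1 + A.2.1 * onSq ξ.2 + 2 * oRe (omul (oconj ξ.1) (omul A.2.2 ξ.2))

/-- Positive definiteness. -/
def PosDefH (A : Herm) : Prop := ∀ ξ : Oct × Oct, ξ ≠ 0 → 0 < qform A ξ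

/-- Nonnegative definiteness. -/
def NonnegDefH (A : Herm) : Prop := ∀ ξ : Oct × Oct, 0 ≤ qform A ξ

/-- The point space ℝ¹⁶, with coordinates x_i^p, i = 1,2 and p = 0,…,7. -/
abbrev Pt : Type := Fin 2 → Fin 8 → ℝ

def qI : ℍ[ℝ] := ⟨0, 1, 0, 0⟩
def qJ : ℍ[ℝ] := ⟨0, 0, 1, 0⟩
def qK : ℍ[ℝ] := ⟨0, 0, 0, 1⟩

/-- The standard real basis e₀ = 1, e₁, …, e₇ of the octonions. -/
def e : Fin 8 → Oct :=
  ![((1 : ℍ[ℝ]), 0), (qI, 0), (qJ, 0), (qK, 0),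
    (0, (1 : ℍ[ℝ])), (0, qI), (0, qJ), (0, qK)]

/-- The coordinate unit vector of the coordinate x_i^p. -/
def uvec (i : Fin 2) (p : Fin 8) : Pt := Pi.single i (Pi.single p 1)

/-- Partial derivative ∂f/∂x_i^p of a real-valued function on ℝ¹⁶. -/
def pd (i : Fin 2) (p : Fin 8) (f : Pt → ℝ) : Pt → ℝ :=
  fun x => fderiv ℝ f x (uvec i p)

/-- The entry f_{ī j} = Σ_{p,q} e_p·(∂²f/∂x_i^p∂x_j^q)·conj(e_q) of the octonionic Hessian. -/
def hessEntry (f : Pt → ℝ) (i j : Fin 2) (x : Pt) : Oct :=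
  ∑ p, ∑ q, pd i p (pd j q f) x • omul (e p) (oconj (e q))

/-- The Laplacian Δᵢ = Σ_p ∂²/∂(x_i^p)² in the i-th octonionic variable. -/
def lap (i : Fin 2) (f : Pt → ℝ) (x : Pt) : ℝ := ∑ p, pd i p (pd i p f) x

/-- The identification ℝ¹⁶ ≅ 𝕆². -/
def toO2 (x : Pt) : Oct × Oct := (∑ p, x 0 p • e p, ∑ p, x 1 p • e p)

open MeasureTheory

/-- u_{ī} := Σ_p e_p · ∂u/∂x_i^p. -/
def dbar (i : Fin 2) (u : Pt → ℝ) (x : Pt) : Oct := ∑ p, pd i p u x • e p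

/-- f_i := Σ_p ∂f/∂x_i^p · conj(e_p). -/
def dlow (i : Fin 2) (f : Pt → ℝ) (x : Pt) : Oct := ∑ p, pd i p f x • oconj (e p)

/-- The mixed determinant det(Hess_𝕆(u), Hess_𝕆(v)) at a point. -/
def mdetHess (u v : Pt → ℝ) (x : Pt) : ℝ :=
  (1 / 2) * (oRe (hessEntry u 0 0 x) * oRe (hessEntry v 1 1 x)
      + oRe (hessEntry v 0 0 x) * oRe (hessEntry u 1 1 x)
      - 2 * oRe (omul (hessEntry u 0 1 x) (oconj (hessEntry v 0 1 x))))


theorem oRe_add (a b : Oct) : oRe (a + b) = oRe a + oRe b := by simp [oRe]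
theorem oRe_sub (a b : Oct) : oRe (a - b) = oRe a - oRe b := by simp [oRe]
theorem oRe_smul (t : ℝ) (a : Oct) : oRe (t • a) = t * oRe a := by simp [oRe]
theorem oRe_sum {ι : Type} (s : Finset ι) (a : ι → Oct) :
    oRe (∑ i ∈ s, a i) = ∑ i ∈ s, oRe (a i) := by
  classical
  induction s using Finset.induction_on with
  | empty => simp [oRe]
  | insert i s hi ih => rw [Finset.sum_insert hi, Finset.sum_insert hi, oRe_add, ih]

theorem omul_add_left (a b c : Oct) : omul (a + b) c = omul a c + omul b c := by
  ext <;> simp [omul] <;> ring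
theorem omul_add_right (a b c : Oct) : omul a (b + c) = omul a b + omul a c := by
  ext <;> simp [omul] <;> ring
theorem omul_smul_left (t : ℝ) (a b : Oct) : omul (t • a) b = t • omul a b := by
  ext <;> simp [omul] <;> ring
theorem omul_smul_right (t : ℝ) (a b : Oct) : omul a (t • b) = t • omul a b := by
  ext <;> simp [omul] <;> ring
theorem omul_sum_left {ι : Type} (s : Finset ι) (a : ι → Oct) (b : Oct) :
    omul (∑ i ∈ s, a i) b = ∑ i ∈ s, omul (a i) b := by
  classical
  induction s using Finset.induction_on with
  | empty => simp [omul]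
  | insert i s hi ih => rw [Finset.sum_insert hi, Finset.sum_insert hi, omul_add_left, ih]
theorem omul_sum_right {ι : Type} (s : Finset ι) (a : ι → Oct) (b : Oct) :
    omul b (∑ i ∈ s, a i) = ∑ i ∈ s, omul b (a i) := by
  classical
  induction s using Finset.induction_on with
  | empty => simp [omul]
  | insert i s hi ih => rw [Finset.sum_insert hi, Finset.sum_insert hi, omul_add_right, ih]
theorem oconj_smul (t : ℝ) (a : Oct) : oconj (t • a) = t • oconj a := by
  simp [oconj]
theorem oconj_add (a b : Oct) : oconj (a + b) = oconj a + oconj b := by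
  simp [oconj, add_comm]
theorem oconj_sum {ι : Type} (s : Finset ι) (a : ι → Oct) :
    oconj (∑ i ∈ s, a i) = ∑ i ∈ s, oconj (a i) := by
  classical
  induction s using Finset.induction_on with
  | empty => simp [oconj]
  | insert i s hi ih => rw [Finset.sum_insert hi, Finset.sum_insert hi, oconj_add, ih]

theorem qI_re : qI.re = 0 := rfl
theorem qI_i : qI.imI = 1 := rfl
theorem qI_j : qI.imJ = 0 := rfl
theorem qI_k : qI.imK = 0 := rfl
theorem qJ_re : qJ.re = 0 := rfl
theorem qJ_i : qJ.imI = 0 := rfl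
theorem qJ_j : qJ.imJ = 1 := rfl
theorem qJ_k : qJ.imK = 0 := rfl
theorem qK_re : qK.re = 0 := rfl
theorem qK_i : qK.imI = 0 := rfl
theorem qK_j : qK.imJ = 0 := rfl
theorem qK_k : qK.imK = 1 := rfl

theorem oRe_mul_conj (a b : Oct) : oRe (omul a (oconj b))
    = a.1.re * b.1.re + a.1.imI * b.1.imI + a.1.imJ * b.1.imJ + a.1.imK * b.1.imK
    + a.2.re * b.2.re + a.2.imI * b.2.imI + a.2.imJ * b.2.imJ + a.2.imK * b.2.imK := by
  simp [omul, oconj, oRe]; ring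

theorem sum4 (F : Fin 8 → Fin 8 → Fin 8 → Fin 8 → ℝ) :
    ∑ r, ∑ s, ∑ p, ∑ q, F r s p q = ∑ p, ∑ q, ∑ r, ∑ s, F r s p q := by
  calc _ = ∑ r, ∑ p, ∑ s, ∑ q, F r s p q := Finset.sum_congr rfl fun _ _ => Finset.sum_comm
    _ = ∑ p, ∑ r, ∑ s, ∑ q, F r s p q := Finset.sum_comm
    _ = ∑ p, ∑ r, ∑ q, ∑ s, F r s p q :=
      Finset.sum_congr rfl fun _ _ => Finset.sum_congr rfl fun _ _ => Finset.sum_comm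
    _ = _ := Finset.sum_congr rfl fun _ _ => Finset.sum_comm

theorem oRe_e (p q : Fin 8) : oRe (omul (e p) (oconj (e q))) = if p = q then 1 else 0 := by
  rw [oRe_mul_conj]
  fin_cases p <;> fin_cases q <;> simp [e, qI_re, qI_i, qI_j, qI_k, qJ_re, qJ_i, qJ_j, qJ_k,
    qK_re, qK_i, qK_j, qK_k]

/-- The structure constants `⟨e_p ē_q, e_r ē_s⟩`. -/
def cc (p q r s : Fin 8) : ℝ :=
  oRe (omul (omul (e p) (oconj (e q))) (oconj (omul (e r) (oconj (e s)))))

theorem oct_id1 (a b c d : Oct) :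
    oRe (omul (oconj a) (omul (omul c (oconj d)) b))
      = oRe (omul (omul a (oconj b)) (oconj (omul c (oconj d)))) := by
  simp [omul, oconj, oRe]; ring

theorem oct_id2 (a b c d : Oct) :
    oRe (omul (omul a (oconj b)) (oconj (omul c (oconj d))))
      = oRe (omul (omul b (oconj a)) (oconj (omul d (oconj c)))) := by
  simp [omul, oconj, oRe]; ring

theorem oct_id3 (a b c d : Oct) :
    oRe (omul (omul a (oconj b)) (oconj (omul c (oconj d))))
      + oRe (omul (omul c (oconj b)) (oconj (omul a (oconj d))))
      = 2 * (oRe (omul a (oconj c)) * oRe (omul b (oconj d))) := by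
  simp [omul, oconj, oRe]; ring

theorem oct_id4 (a b c d : Oct) :
    oRe (omul (omul a (oconj b)) (oconj (omul c (oconj d))))
      + oRe (omul (omul a (oconj b)) (oconj (omul d (oconj c))))
      = 2 * (oRe (omul a (oconj b)) * oRe (omul c (oconj d))) := by
  simp [omul, oconj, oRe]; ring

theorem cc_swap (p q r s : Fin 8) : cc p q r s = cc q p s r := oct_id2 _ _ _ _
theorem cc_13 (p q r s : Fin 8) : cc p q r s + cc r q p s
    = 2 * ((if p = r then 1 else 0) * (if q = s then 1 else 0)) := by
  rw [← oRe_e, ← oRe_e]; exact oct_id3 _ _ _ _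
theorem cc_34 (p q r s : Fin 8) : cc p q r s + cc p q s r
    = 2 * ((if p = q then 1 else 0) * (if r = s then 1 else 0)) := by
  rw [← oRe_e, ← oRe_e]; exact oct_id4 _ _ _ _

/-- Contraction with a symmetric array in positions 1,3. -/
theorem contr13 (V : Fin 8 → Fin 8 → Fin 8 → ℝ) (U : Fin 8 → ℝ)
    (hV : ∀ p r s, V p r s = V r p s) :
    ∑ p, ∑ q, ∑ r, ∑ s, cc p q r s * (V p r s * U q) = ∑ p, ∑ q, V p p q * U q := by
  have h1 : ∑ p, ∑ q, ∑ r, ∑ s, cc p q r s * (V p r s * U q)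
      = ∑ p, ∑ q, ∑ r, ∑ s, cc r q p s * (V p r s * U q) := by
    rw [Finset.sum_comm]
    conv_rhs => rw [Finset.sum_comm]
    refine Finset.sum_congr rfl fun q _ => ?_
    rw [Finset.sum_comm]
    refine Finset.sum_congr rfl fun r _ => Finset.sum_congr rfl fun p _ =>
      Finset.sum_congr rfl fun s _ => ?_
    rw [hV]
  have h2 : ∑ p, ∑ q, ∑ r, ∑ s, cc p q r s * (V p r s * U q)
      + ∑ p, ∑ q, ∑ r, ∑ s, cc r q p s * (V p r s * U q)
      = 2 * ∑ p, ∑ q, V p p q * U q := by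
    simp only [← Finset.sum_add_distrib, ← add_mul, cc_13, Finset.mul_sum]
    refine Finset.sum_congr rfl fun p _ => Finset.sum_congr rfl fun q _ => ?_
    rw [Finset.sum_eq_single p, Finset.sum_eq_single q]
    · simp
    · intro s _ hs; simp [Ne.symm hs]
    · simp
    · intro s _ hs; simp [Ne.symm hs]
    · simp
  linarith

theorem contr34 (V : Fin 8 → Fin 8 → Fin 8 → ℝ) (U : Fin 8 → Fin 8 → ℝ)
    (hV : ∀ p r s, V p r s = V p s r) :
    ∑ p, ∑ q, ∑ r, ∑ s, cc p q r s * (V p r s * U p q) = ∑ p, ∑ r, V p r r * U p p := by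
  have h1 : ∑ p, ∑ q, ∑ r, ∑ s, cc p q r s * (V p r s * U p q)
      = ∑ p, ∑ q, ∑ r, ∑ s, cc p q s r * (V p r s * U p q) := by
    refine Finset.sum_congr rfl fun p _ => Finset.sum_congr rfl fun q _ => ?_
    rw [Finset.sum_comm]
    refine Finset.sum_congr rfl fun r _ => Finset.sum_congr rfl fun s _ => ?_
    rw [hV]
  have h2 : ∑ p, ∑ q, ∑ r, ∑ s, cc p q r s * (V p r s * U p q)
      + ∑ p, ∑ q, ∑ r, ∑ s, cc p q s r * (V p r s * U p q)
      = 2 * ∑ p, ∑ r, V p r r * U p p := by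
    simp only [← Finset.sum_add_distrib, ← add_mul, cc_34, Finset.mul_sum]
    refine Finset.sum_congr rfl fun p _ => ?_
    rw [Finset.sum_eq_single p]
    · refine Finset.sum_congr rfl fun r _ => ?_
      rw [Finset.sum_eq_single r]
      · simp
      · intro s _ hs; simp [Ne.symm hs]
      · simp
    · intro s _ hs; simp [Ne.symm hs]
    · simp
  linarith

theorem oRe_triple (f v u : Pt → ℝ) (i k l m : Fin 2) (x : Pt) :
    oRe (omul (dlow i f x) (omul (hessEntry v k l x) (dbar m u x)))
      = ∑ p, pd i p f x * ∑ q, ∑ r, ∑ s, cc p q r s * (pd k r (pd l s v) x * pd m q u x) := by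
  simp only [dlow, hessEntry, dbar, omul_sum_left, omul_sum_right, omul_smul_left,
    omul_smul_right, oRe_sum, oRe_smul, Finset.mul_sum, Finset.smul_sum, oct_id1]
  conv_rhs => rw [Finset.sum_comm]
  refine Finset.sum_congr rfl fun q _ => ?_
  conv_rhs => rw [Finset.sum_comm]
  refine Finset.sum_congr rfl fun r _ => ?_
  conv_rhs => rw [Finset.sum_comm]
  refine Finset.sum_congr rfl fun s _ => Finset.sum_congr rfl fun p _ => ?_
  rw [cc]
  ring

theorem oRe_hess_diag (u : Pt → ℝ) (i : Fin 2) (x : Pt) :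
    oRe (hessEntry u i i x) = ∑ p, pd i p (pd i p u) x := by
  simp [hessEntry, oRe_sum, oRe_smul, oRe_e]

theorem oRe_hess_mul (u v : Pt → ℝ) (i j : Fin 2) (x : Pt) :
    oRe (omul (hessEntry u i j x) (oconj (hessEntry v i j x)))
      = ∑ p, ∑ q, ∑ r, ∑ s, cc p q r s * (pd i r (pd j s v) x * pd i p (pd j q u) x) := by
  simp only [hessEntry, omul_sum_left, omul_sum_right, omul_smul_left,
    omul_smul_right, oRe_sum, oRe_smul, oconj_sum, oconj_smul]
  simp only [Finset.mul_sum]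
  rw [sum4]
  refine Finset.sum_congr rfl fun p _ => Finset.sum_congr rfl fun q _ =>
    Finset.sum_congr rfl fun r _ => Finset.sum_congr rfl fun s _ => ?_
  rw [cc]
  ring

/-! Analysis -/

abbrev Sm (g : Pt → ℝ) : Prop := ContDiff ℝ (⊤ : ℕ∞) g

theorem Sm.diff {g : Pt → ℝ} (h : Sm g) : Differentiable ℝ g :=
  h.differentiable (by simp)

theorem Sm.pd {g : Pt → ℝ} (h : Sm g) (i : Fin 2) (p : Fin 8) : Sm (pd i p g) := by
  have : Sm (fun x => fderiv ℝ g x (uvec i p)) :=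
    (h.fderiv_right (m := (⊤ : ℕ∞)) (by simp)).clm_apply contDiff_const
  exact this

theorem pd_comm {g : Pt → ℝ} (h : Sm g) (i j : Fin 2) (p q : Fin 8) :
    pd i p (pd j q g) = pd j q (pd i p g) := by
  funext x
  have hd : Differentiable ℝ (fderiv ℝ g) :=
    (h.fderiv_right (m := (⊤ : ℕ∞)) (by simp)).differentiable (by simp)
  have key : ∀ (a b : Pt), fderiv ℝ (fun y => fderiv ℝ g y a) x b
      = fderiv ℝ (fderiv ℝ g) x b a := by
    intro a b
    rw [fderiv_clm_apply (hd x) (by fun_prop)]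
    simp
  have hs : IsSymmSndFDerivAt ℝ g x :=
    h.contDiffAt.isSymmSndFDerivAt (by
      rw [minSmoothness_of_isRCLikeNormedField]; exact WithTop.coe_le_coe.2 (le_top : (2 : ℕ∞) ≤ ⊤))
  show fderiv ℝ (fun y => fderiv ℝ g y (uvec j q)) x (uvec i p)
    = fderiv ℝ (fun y => fderiv ℝ g y (uvec i p)) x (uvec j q)
  rw [key, key]
  exact hs _ _

theorem pd_supp {g : Pt → ℝ} (h : HasCompactSupport g) (i : Fin 2) (p : Fin 8) :
    HasCompactSupport (pd i p g) := h.fderiv_apply ℝ (uvec i p)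

theorem pd_mul {g h : Pt → ℝ} (hg : Sm g) (hh : Sm h) (i : Fin 2) (p : Fin 8) (x : Pt) :
    pd i p (fun y => g y * h y) x = pd i p g x * h x + g x * pd i p h x := by
  unfold pd
  rw [fderiv_fun_mul (hg.diff x) (hh.diff x)]
  simp; ring

theorem pd_sub {g h : Pt → ℝ} (hg : Sm g) (hh : Sm h) (i : Fin 2) (p : Fin 8) (x : Pt) :
    pd i p (fun y => g y - h y) x = pd i p g x - pd i p h x := by
  unfold pd
  rw [fderiv_fun_sub (hg.diff x) (hh.diff x)]
  simp

theorem pd_const_mul {g : Pt → ℝ} (hg : Sm g) (c : ℝ) (i : Fin 2) (p : Fin 8) (x : Pt) :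
    pd i p (fun y => c * g y) x = c * pd i p g x := by
  unfold pd
  rw [fderiv_const_mul (hg.diff x)]
  simp

theorem pd_sum {g : Fin 8 → Pt → ℝ} (hg : ∀ q, Sm (g q)) (i : Fin 2) (p : Fin 8) (x : Pt) :
    pd i p (fun y => ∑ q, g q y) x = ∑ q, pd i p (g q) x := by
  unfold pd
  rw [fderiv_fun_sum (fun q _ => (hg q).diff x)]
  simp

theorem Sm.integrable {g : Pt → ℝ} (h : Sm g) (hc : HasCompactSupport g) : Integrable g :=
  h.continuous.integrable_of_hasCompactSupport hc

theorem ibp {g h : Pt → ℝ} (hg : Sm g) (hh : Sm h)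
    (hc : HasCompactSupport g ∨ HasCompactSupport h) (i : Fin 2) (p : Fin 8) :
    Integrable (fun x => g x * pd i p h x) ∧ Integrable (fun x => pd i p g x * h x) ∧
    ∫ x, pd i p g x * h x = - ∫ x, g x * pd i p h x := by
  have i1 : Integrable (fun x => g x * pd i p h x) :=
    Sm.integrable (hg.mul (hh.pd i p))
      (hc.elim (fun c => c.mul_right) (fun c => (pd_supp c i p).mul_left))
  have i2 : Integrable (fun x => pd i p g x * h x) :=
    Sm.integrable ((hg.pd i p).mul hh)
      (hc.elim (fun c => (pd_supp c i p).mul_right) (fun c => c.mul_left))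
  have i3 : Integrable (fun x => g x * h x) :=
    Sm.integrable (hg.mul hh) (hc.elim (fun c => c.mul_right) (fun c => c.mul_left))
  refine ⟨i1, i2, ?_⟩
  have := integral_mul_fderiv_eq_neg_fderiv_mul_of_integrable (μ := volume) (v := uvec i p)
    i2 i1 i3 (fun x _ => hg.diff x) (fun x _ => hh.diff x)
  unfold pd
  linarith

theorem ibp_div {f : Pt → ℝ} {G : Fin 2 → Fin 8 → Pt → ℝ} (hf : Sm f) (hG : ∀ i p, Sm (G i p))
    (hc : HasCompactSupport f ∨ ∀ i p, HasCompactSupport (G i p)) :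
    ∫ x, ∑ i, ∑ p, pd i p f x * G i p x = - ∫ x, f x * ∑ i, ∑ p, pd i p (G i p) x := by
  have H := fun i p => ibp hf (hG i p) (hc.imp id (fun c => c i p)) i p
  simp only [Finset.mul_sum]
  rw [integral_finsetSum _ (fun i _ => integrable_finsetSum _ fun p _ => (H i p).2.1),
    integral_finsetSum _ (fun i _ => integrable_finsetSum _ fun p _ => (H i p).1),
    ← Finset.sum_neg_distrib]
  refine Finset.sum_congr rfl fun i _ => ?_
  rw [integral_finsetSum _ (fun p _ => (H i p).2.1),
    integral_finsetSum _ (fun p _ => (H i p).1), ← Finset.sum_neg_distrib]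
  exact Finset.sum_congr rfl fun p _ => (H i p).2.2

def BB (u v : Pt → ℝ) (k l m : Fin 2) (p : Fin 8) (x : Pt) : ℝ :=
  ∑ q, ∑ r, ∑ s, cc p q r s * (pd k r (pd l s v) x * pd m q u x)

theorem BB_sm {u v : Pt → ℝ} (hu : Sm u) (hv : Sm v) (k l m : Fin 2) (p : Fin 8) :
    Sm (BB u v k l m p) := by
  unfold BB
  exact ContDiff.sum fun q _ => ContDiff.sum fun r _ => ContDiff.sum fun s _ =>
    contDiff_const.mul (((hv.pd l s).pd k r).mul (hu.pd m q))

theorem BB_supp {u v : Pt → ℝ} (hc : HasCompactSupport u ∨ HasCompactSupport v)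
    (k l m : Fin 2) (p : Fin 8) : HasCompactSupport (BB u v k l m p) := by
  rcases hc with c | c
  · refine HasCompactSupport.intro (K := tsupport u) c fun x hx => ?_
    have : ∀ q, pd m q u x = 0 := fun q => by
      have h : x ∉ tsupport (pd m q u) := fun h => hx (tsupport_fderiv_apply_subset ℝ _ h)
      exact image_eq_zero_of_notMem_tsupport h
    simp [BB, this]
  · refine HasCompactSupport.intro (K := tsupport v) c fun x hx => ?_
    have : ∀ r s, pd k r (pd l s v) x = 0 := fun r s => by
      have h : x ∉ tsupport (pd k r (pd l s v)) := fun h =>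
        hx (tsupport_fderiv_apply_subset ℝ _ (tsupport_fderiv_apply_subset ℝ _ h))
      exact image_eq_zero_of_notMem_tsupport h
    simp [BB, this]

theorem pd_BB {u v : Pt → ℝ} (hu : Sm u) (hv : Sm v) (i k l m : Fin 2) (p : Fin 8) (x : Pt) :
    pd i p (BB u v k l m p) x
      = ∑ q, ∑ r, ∑ s, cc p q r s * (pd i p (pd k r (pd l s v)) x * pd m q u x)
      + ∑ q, ∑ r, ∑ s, cc p q r s * (pd k r (pd l s v) x * pd i p (pd m q u) x) := by
  have s0 : ∀ q r s, Sm (fun x => pd k r (pd l s v) x * pd m q u x) := fun q r s =>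
    ((hv.pd l s).pd k r).mul (hu.pd m q)
  have s1 : ∀ q r s, Sm (fun x => cc p q r s * (pd k r (pd l s v) x * pd m q u x)) :=
    fun q r s => contDiff_const.mul (s0 q r s)
  have s2 : ∀ q r, Sm (fun x => ∑ s, cc p q r s * (pd k r (pd l s v) x * pd m q u x)) :=
    fun q r => ContDiff.sum fun s _ => s1 q r s
  have s3 : ∀ q, Sm (fun x => ∑ r, ∑ s, cc p q r s * (pd k r (pd l s v) x * pd m q u x)) :=
    fun q => ContDiff.sum fun r _ => s2 q r
  simp only [← Finset.sum_add_distrib]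
  refine (pd_sum s3 i p x).trans (Finset.sum_congr rfl fun q _ => ?_)
  refine (pd_sum (s2 q) i p x).trans (Finset.sum_congr rfl fun r _ => ?_)
  refine (pd_sum (s1 q r) i p x).trans (Finset.sum_congr rfl fun s _ => ?_)
  rw [pd_const_mul (s0 q r s), pd_mul ((hv.pd l s).pd k r) (hu.pd m q)]
  ring

/-- The divergence-free part plus the Hessian part, one index `i` with partner `j`. -/
theorem div_diag {u v : Pt → ℝ} (hu : Sm u) (hv : Sm v) (i j : Fin 2) (x : Pt) :
    ∑ p, pd i p (BB u v j j i p) x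
      = (∑ p, ∑ r, pd j r (pd j r (pd i p v)) x * pd i p u x)
        + oRe (hessEntry u i i x) * oRe (hessEntry v j j x) := by
  simp only [pd_BB hu hv, Finset.sum_add_distrib]
  rw [contr34 (fun p r s => pd i p (pd j r (pd j s v)) x) (fun p q => pd i q u x)
      (fun p r s => by rw [pd_comm hv]),
    contr34 (fun p r s => pd j r (pd j s v) x) (fun p q => pd i p (pd i q u) x)
      (fun p r s => by rw [pd_comm hv])]
  congr 1
  · refine Finset.sum_congr rfl fun p _ => Finset.sum_congr rfl fun r _ => ?_
    rw [pd_comm (hv.pd j r) i j, pd_comm hv i j]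
  · rw [oRe_hess_diag, oRe_hess_diag, Finset.sum_mul_sum]
    exact Finset.sum_congr rfl fun p _ => Finset.sum_congr rfl fun r _ => mul_comm _ _

theorem div_off {u v : Pt → ℝ} (hu : Sm u) (hv : Sm v) (i j : Fin 2) (x : Pt) :
    ∑ p, pd i p (BB u v i j j p) x
      = (∑ p, ∑ r, pd i r (pd i r (pd j p v)) x * pd j p u x)
        + oRe (omul (hessEntry u i j x) (oconj (hessEntry v i j x))) := by
  simp only [pd_BB hu hv, Finset.sum_add_distrib, oRe_hess_mul]
  rw [contr13 (fun p r s => pd i p (pd i r (pd j s v)) x) (fun q => pd j q u x)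
      (fun p r s => by rw [pd_comm (hv.pd j s)])]
  congr 1
  exact Finset.sum_comm

theorem hess_swap {u v : Pt → ℝ} (hu : Sm u) (hv : Sm v) (x : Pt) :
    oRe (omul (hessEntry u 1 0 x) (oconj (hessEntry v 1 0 x)))
      = oRe (omul (hessEntry u 0 1 x) (oconj (hessEntry v 0 1 x))) := by
  rw [oRe_hess_mul, oRe_hess_mul, Finset.sum_comm]
  refine Finset.sum_congr rfl fun p _ => Finset.sum_congr rfl fun q _ => ?_
  rw [Finset.sum_comm]
  refine Finset.sum_congr rfl fun r _ => Finset.sum_congr rfl fun s _ => ?_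
  rw [cc_swap, pd_comm hv 1 0, pd_comm hu 1 0]

theorem integration_by_parts (u v f : Pt → ℝ)
    (hu : ContDiff ℝ (⊤ : ℕ∞) u) (hv : ContDiff ℝ (⊤ : ℕ∞) v) (hf : ContDiff ℝ (⊤ : ℕ∞) f)
    (hsupp : HasCompactSupport u ∨ HasCompactSupport v ∨ HasCompactSupport f) :
    ∫ x, mdetHess u v x * f x
      = -(1 / 2) * ∫ x, oRe
          (omul (dlow 0 f x) (omul (hessEntry v 1 1 x) (dbar 0 u x))
          - omul (dlow 0 f x) (omul (hessEntry v 0 1 x) (dbar 1 u x))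
          - omul (dlow 1 f x) (omul (hessEntry v 1 0 x) (dbar 0 u x))
          + omul (dlow 1 f x) (omul (hessEntry v 0 0 x) (dbar 1 u x))) := by
  let G : Fin 2 → Fin 8 → Pt → ℝ := fun i p x =>
    BB u v (1 - i) (1 - i) i p x - BB u v i (1 - i) (1 - i) p x
  have hG : ∀ i p, Sm (G i p) := fun i p => (BB_sm hu hv _ _ _ p).sub (BB_sm hu hv _ _ _ p)
  have hc : HasCompactSupport f ∨ ∀ i p, HasCompactSupport (G i p) := by
    have key : (HasCompactSupport u ∨ HasCompactSupport v) → ∀ i p, HasCompactSupport (G i p) :=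
      fun h i p => (BB_supp h _ _ _ p).sub (BB_supp h _ _ _ p)
    rcases hsupp with h | h | h
    · exact Or.inr (key (Or.inl h))
    · exact Or.inr (key (Or.inr h))
    · exact Or.inl h
  have main := ibp_div hf hG hc
  have e1 : ∀ x, oRe
          (omul (dlow 0 f x) (omul (hessEntry v 1 1 x) (dbar 0 u x))
          - omul (dlow 0 f x) (omul (hessEntry v 0 1 x) (dbar 1 u x))
          - omul (dlow 1 f x) (omul (hessEntry v 1 0 x) (dbar 0 u x))
          + omul (dlow 1 f x) (omul (hessEntry v 0 0 x) (dbar 1 u x)))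
      = ∑ i, ∑ p, pd i p f x * G i p x := by
    intro x
    simp only [oRe_add, oRe_sub, oRe_triple, Fin.sum_univ_two, G, mul_sub,
      Finset.sum_sub_distrib]
    simp only [BB, sub_self, sub_zero]
    ring
  have e2 : ∀ x, f x * ∑ i, ∑ p, pd i p (G i p) x = 2 * (mdetHess u v x * f x) := by
    intro x
    have h : ∀ i p, pd i p (G i p) x
        = pd i p (BB u v (1 - i) (1 - i) i p) x - pd i p (BB u v i (1 - i) (1 - i) p) x :=
      fun i p => pd_sub (BB_sm hu hv _ _ _ p) (BB_sm hu hv _ _ _ p) i p x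
    simp only [h, Finset.sum_sub_distrib, div_diag hu hv, div_off hu hv, Fin.sum_univ_two,
      sub_self, sub_zero, hess_swap hu hv, mdetHess]
    ring
  simp only [e1, main, e2]
  rw [integral_const_mul]
  ring
end
end

section
/- Let A be a positive definite octonionic Hermitian 2×2 matrix and B any octonionic Hermitian 2×2 matrix. Then tr((A⁻¹·B)·(A⁻¹·B)) ≥ 0, where A⁻¹ := (1/det A)·adj(A). (The key inequality established in the proof of Lemma 15.2.) -/
noncomputable section

open scoped Quaternion

/-- 2×2 matrices with octonionic entries. -/
abbrev Omat : Type := Fin 2 → Fin 2 → Oct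

/-- Product of 2×2 octonionic matrices. -/
def matMul (X Y : Omat) : Omat := fun i j => ∑ k, omul (X i k) (Y k j)

/-- Embedding of ℝ into the octonions. -/
def oR (r : ℝ) : Oct := ((r : ℍ[ℝ]), 0)

/-- The 2×2 octonionic matrix [[α, q],[q̄, β]] attached to a Hermitian triple. -/
def hermToMat (A : Herm) : Omat := ![![oR A.1, A.2.2], ![oconj A.2.2, oR A.2.1]]

/-- The 2×2 identity matrix. -/
def idMat : Omat := ![![oR 1, 0], ![0, oR 1]]

/-- The adjugate adj(A) = (β, α, −q) of an octonionic Hermitian matrix A = (α, β, q). -/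
def adjH (A : Herm) : Herm := (A.2.1, A.1, -A.2.2)

/-- The real trace tr(X) = Re(X₁₁) + Re(X₂₂) of a 2×2 octonionic matrix. -/
def otr (X : Omat) : ℝ := oRe (X 0 0) + oRe (X 1 1)

/-- The inverse A⁻¹ = (1/det A)·adj(A) of an octonionic Hermitian matrix. -/
def invH (A : Herm) : Herm := (detH A)⁻¹ • adjH A

/-- The real inner product of octonions. -/
def oinner (p q : Oct) : ℝ := oRe (omul p (oconj q))

theorem onSq_coord (q : Oct) : onSq q = q.1.re^2 + q.1.imI^2 + q.1.imJ^2 + q.1.imK^2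
    + q.2.re^2 + q.2.imI^2 + q.2.imJ^2 + q.2.imK^2 := by
  simp [onSq, oRe, omul, oconj]
  ring

theorem onSq_nonneg' (q : Oct) : 0 ≤ onSq q := by
  rw [onSq_coord]; positivity

theorem oinner_coord (p q : Oct) : oinner p q = p.1.re*q.1.re + p.1.imI*q.1.imI
    + p.1.imJ*q.1.imJ + p.1.imK*q.1.imK + p.2.re*q.2.re + p.2.imI*q.2.imI
    + p.2.imJ*q.2.imJ + p.2.imK*q.2.imK := by
  simp [oinner, oRe, omul, oconj]
  ring

theorem onSq_comb (x y : ℝ) (p q : Oct) :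
    onSq (x • p + y • q) = x^2 * onSq p + y^2 * onSq q + 2 * x * y * oinner p q := by
  simp only [onSq_coord, oinner_coord]
  simp
  ring

theorem trace_formula (C B : Herm) :
    otr (matMul (matMul (hermToMat C) (hermToMat B)) (matMul (hermToMat C) (hermToMat B)))
      = (C.1 * B.1 + C.2.1 * B.2.1 + 2 * oinner C.2.2 B.2.2)^2 - 2 * detH C * detH B := by
  obtain ⟨a, b, p⟩ := C
  obtain ⟨c, d, q⟩ := B
  simp only [detH, onSq_coord, oinner_coord]
  simp [otr, matMul, hermToMat, oRe, omul, oconj, oR, Fin.sum_univ_two]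
  ring

theorem posDef_pos (A : Herm) (hA : PosDefH A) : 0 < A.1 ∧ 0 < A.2.1 ∧ 0 < detH A := by
  have h1 : 0 < A.1 := by
    have := hA (oR 1, 0) (by
      intro h
      have := congrArg (fun z : Oct × Oct => z.1.1.re) h
      simp [oR] at this)
    simpa [qform, onSq, oRe, omul, oconj, oR] using this
  have h2 : 0 < A.2.1 := by
    have := hA (0, oR 1) (by
      intro h
      have := congrArg (fun z : Oct × Oct => z.2.1.re) h
      simp [oR] at this)
    simpa [qform, onSq, oRe, omul, oconj, oR] using this
  refine ⟨h1, h2, ?_⟩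
  have h3 := hA (-A.2.2, oR A.1) (by
      intro h
      have := congrArg (fun z : Oct × Oct => z.2.1.re) h
      simp [oR] at this
      exact h1.ne' this)
  have h4 : qform A (-A.2.2, oR A.1) = A.1 * detH A := by
    simp only [qform, detH, onSq_coord]
    simp [oRe, omul, oconj, oR]
    ring
  rw [h4] at h3
  exact pos_of_mul_pos_right h3 h1.le

theorem detH_inv (A : Herm) (h : detH A ≠ 0) : detH (invH A) = (detH A)⁻¹ := by
  have : detH (invH A) = (detH A)⁻¹^2 * detH A := by
    unfold invH
    generalize (detH A)⁻¹ = r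
    simp only [adjH, detH, onSq_coord]
    simp
    ring
  rw [this]; field_simp

theorem core (C B : Herm) (hC : C.1 ≠ 0) (hD : 0 < detH C) :
    0 ≤ (C.1 * B.1 + C.2.1 * B.2.1 + 2 * oinner C.2.2 B.2.2)^2 - 2 * detH C * detH B := by
  set s := C.1 * B.1 + C.2.1 * B.2.1 + 2 * oinner C.2.2 B.2.2 with hs
  rcases le_or_gt (detH B) 0 with hE | hE
  · nlinarith [sq_nonneg s, mul_nonneg hD.le (neg_nonneg.2 hE)]
  · have hd : B.2.1 ≠ 0 := by
      intro h0
      have := onSq_nonneg' B.2.2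
      simp only [detH, h0] at hE
      linarith
    have key : C.1 * B.2.1 * s = C.1^2 * detH B + detH C * B.2.1^2
        + onSq (B.2.1 • C.2.2 + C.1 • B.2.2) := by
      rw [onSq_comb, hs]; simp only [detH]; ring
    have hn := onSq_nonneg' (B.2.1 • C.2.2 + C.1 • B.2.2)
    have hp : 0 < (C.1 * B.2.1)^2 := by positivity
    have h0 : 0 ≤ C.1^2 * detH B + detH C * B.2.1^2 := by positivity
    have h1 : (C.1^2 * detH B + detH C * B.2.1^2)^2 ≤ (C.1 * B.2.1 * s)^2 :=
      pow_le_pow_left₀ h0 (by linarith) 2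
    have h2 : 0 ≤ (C.1 * B.2.1)^2 * (s^2 - 2 * detH C * detH B) := by
      have : 0 ≤ (C.1 * B.2.1)^2 * (detH C * detH B) := by positivity
      nlinarith [sq_nonneg (C.1^2 * detH B - detH C * B.2.1^2)]
    exact nonneg_of_mul_nonneg_right h2 hp

/-- The key inequality in the proof of Lemma 15.2: for A positive definite and B
octonionic Hermitian, tr((A⁻¹B)(A⁻¹B)) ≥ 0. -/
theorem trace_square_nonneg (A B : Herm) (hA : PosDefH A) :
    0 ≤ otr (matMul (matMul (hermToMat (invH A)) (hermToMat B))
             (matMul (hermToMat (invH A)) (hermToMat B))) := by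
  obtain ⟨h1, h2, h3⟩ := posDef_pos A hA
  rw [trace_formula]
  apply core
  · simp only [invH, adjH, Prod.smul_fst, smul_eq_mul]
    positivity
  · rw [detH_inv A h3.ne']
    positivity
end
end
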